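/- Assume M = Q and that X̄₀^red ∈ ℝ^{Q×Q} is invertible. Then D₂ := ΔX₀·𝒩⁻¹·ΔX₀ᵀ ∈ ℝ^{Q×Q} is symmetric positive semidefinite, X̄₀^red·(X̄₀^red)ᵀ is symmetric positive definite, and therefore X₀·𝒩⁻¹·X₀ᵀ = X̄₀^red·(X̄₀^red)ᵀ + D₂ is positive definite, in particular invertible. -/

import Mathlib

/-!
The one-hot label matrix `E` satisfies `E 𝒩⁻¹ Eᵀ = 1`: its rows are orthonormal for the inner
product `⟨x, y⟩ = x 𝒩⁻¹ yᵀ` on row vectors. The class means `X̄₀^red = X₀ 𝒩⁻¹ Eᵀ` are the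
coordinates of the orthogonal projections `X̄₀ = X̄₀^red E` of the rows of `X₀` onto the row space
of `E`, and `ΔX₀` is the orthogonal remainder. The decomposition of `X₀ 𝒩⁻¹ X₀ᵀ` is therefore
Pythagoras' theorem for Gram matrices, and its first summand, a Gram matrix of independent rows, is
positive definite.
-/

open Matrix

noncomputable section

/-- Index type for training inputs: class `j ∈ {1,…,Q}` and sample `i ∈ {1,…,N_j}`. -/
abbrev Idx (Q : ℕ) (Nc : Fin Q → ℕ) : Type := (j : Fin Q) × Fin (Nc j)

/-- The matrix `X̄₀^red ∈ ℝ^{M×Q}` of class means `x̄_{0,j} = (1/N_j)·Σ_i x_{0,j,i}`. -/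
def classMeans {Q M : ℕ} (Nc : Fin Q → ℕ) (X : Matrix (Fin M) (Idx Q Nc) ℝ) :
    Matrix (Fin M) (Fin Q) ℝ :=
  Matrix.of fun m j => (Nc j : ℝ)⁻¹ * ∑ i : Fin (Nc j), X m ⟨j, i⟩

/-- The matrix `X̄₀ ∈ ℝ^{M×N}` with column `x̄_{0,j}` at each position of class `j`. -/
def barX {Q M : ℕ} (Nc : Fin Q → ℕ) (X : Matrix (Fin M) (Idx Q Nc) ℝ) :
    Matrix (Fin M) (Idx Q Nc) ℝ :=
  Matrix.of fun m p => classMeans Nc X m p.1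

/-- The deviation matrix `ΔX₀ := X₀ − X̄₀`. -/
def deltaX {Q M : ℕ} (Nc : Fin Q → ℕ) (X : Matrix (Fin M) (Idx Q Nc) ℝ) :
    Matrix (Fin M) (Idx Q Nc) ℝ := X - barX Nc X

/-- The block-diagonal weight matrix `𝒩 = diag(N_j·1_{N_j×N_j})`. -/
def calN (Q : ℕ) (Nc : Fin Q → ℕ) : Matrix (Idx Q Nc) (Idx Q Nc) ℝ :=
  Matrix.diagonal fun p => (Nc p.1 : ℝ)

/-- The extended target matrix `Y^ext ∈ ℝ^{Q×N}`: column `y_j` at each position of class `j`. -/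
def Yext {Q : ℕ} (Nc : Fin Q → ℕ) (Y : Matrix (Fin Q) (Fin Q) ℝ) :
    Matrix (Fin Q) (Idx Q Nc) ℝ :=
  Matrix.of fun q p => Y q p.1

/-- Entrywise ReLU on matrices: `σ(A)_{kl} = max(0, A_{kl})`. -/
def relu {m n : Type*} (A : Matrix m n ℝ) : Matrix m n ℝ :=
  Matrix.of fun i j => max 0 (A i j)

/-- Euclidean norm of a vector in `ℝ^k`. -/
def enorm {k : ℕ} (v : Fin k → ℝ) : ℝ := Real.sqrt (∑ i, (v i) ^ 2)

/-- Frobenius (Hilbert–Schmidt) norm `‖B‖_F = √Tr(BBᵀ)`. -/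
def frob {m n : Type*} [Fintype m] [Fintype n] (A : Matrix m n ℝ) : ℝ :=
  Real.sqrt (Matrix.trace (A * Aᵀ))

/-- The replicated-bias matrix `b·u_Nᵀ ∈ ℝ^{M×N}`. -/
def colRep {Q M : ℕ} (Nc : Fin Q → ℕ) (b : Fin M → ℝ) : Matrix (Fin M) (Idx Q Nc) ℝ :=
  Matrix.of fun m _ => b m

/-- The weighted `L²_𝒩` norm `‖A‖ = √Tr(A𝒩⁻¹Aᵀ)`. -/
def l2N {Q M : ℕ} (Nc : Fin Q → ℕ) (A : Matrix (Fin M) (Idx Q Nc) ℝ) : ℝ :=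
  Real.sqrt (Matrix.trace (A * (calN Q Nc)⁻¹ * Aᵀ))

/-- `ℓ²→ℓ²` operator norm of a matrix. -/
def opNorm {m n : ℕ} (A : Matrix (Fin m) (Fin n) ℝ) : ℝ :=
  ‖LinearMap.toContinuousLinearMap (Matrix.toEuclideanLin A)‖

section WeightedGram

variable {m n q R : Type*} [CommRing R] [Fintype n] [Fintype q] [DecidableEq q]
  {W : Matrix n n R} {E : Matrix q n R}

lemma sub_projection_mul_transpose_eq_zero (hE : E * W * Eᵀ = 1) (X : Matrix m n R) :
    (X - X * W * Eᵀ * E) * W * Eᵀ = 0 := by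
  calc (X - X * W * Eᵀ * E) * W * Eᵀ
      = X * W * Eᵀ - X * W * Eᵀ * (E * W * Eᵀ) := by
        simp only [Matrix.sub_mul, Matrix.mul_assoc]
    _ = 0 := by rw [hE, Matrix.mul_one, sub_self]

lemma gram_eq_gram_coords_add_gram_sub_projection (hW : W.IsSymm) (hE : E * W * Eᵀ = 1)
    (X : Matrix m n R) :
    X * W * Xᵀ = X * W * Eᵀ * (X * W * Eᵀ)ᵀ +
      (X - X * W * Eᵀ * E) * W * (X - X * W * Eᵀ * E)ᵀ := by
  have hΔE := sub_projection_mul_transpose_eq_zero hE X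
  set C := X * W * Eᵀ
  set Δ := X - C * E with hΔ
  have hEΔ : E * W * Δᵀ = 0 := by
    simpa only [transpose_mul, transpose_transpose, hW.eq, transpose_zero, Matrix.mul_assoc]
      using congrArg transpose hΔE
  have hX : X = C * E + Δ := by rw [hΔ, add_sub_cancel]
  calc X * W * Xᵀ
      = (C * E + Δ) * W * (C * E + Δ)ᵀ := by rw [← hX]
    _ = C * (E * W * Eᵀ) * Cᵀ + C * (E * W * Δᵀ) + Δ * W * Eᵀ * Cᵀ + Δ * W * Δᵀ := by
        simp only [transpose_add, transpose_mul, Matrix.add_mul, Matrix.mul_add, Matrix.mul_assoc]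
        abel
    _ = C * Cᵀ + Δ * W * Δᵀ := by
        rw [hE, hEΔ, hΔE, Matrix.mul_one, Matrix.mul_zero, Matrix.zero_mul, add_zero, add_zero]

end WeightedGram

section ClassWeights

variable {Q : ℕ} (Nc : Fin Q → ℕ)

/-- The one-hot label matrix `E ∈ ℝ^{Q×N}`, whose `j`-th row is the indicator of class `j`. Right
multiplication by `E` repeats the `j`-th column of a matrix over class `j`. -/
def classIndicator : Matrix (Fin Q) (Idx Q Nc) ℝ :=
  (1 : Matrix (Fin Q) (Fin Q) ℝ).submatrix id Sigma.fst

lemma classIndicator_apply (j : Fin Q) (p : Idx Q Nc) :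
    classIndicator Nc j p = if j = p.1 then 1 else 0 := rfl

lemma mul_classIndicator {m : Type*} (A : Matrix m (Fin Q) ℝ) :
    A * classIndicator Nc = A.submatrix id Sigma.fst := by
  ext a p
  simp [classIndicator_apply, Matrix.mul_apply]

lemma calN_inv_eq_diagonal : (calN Q Nc)⁻¹ = diagonal fun p => (Nc p.1 : ℝ)⁻¹ := by
  refine inv_eq_right_inv ?_
  rw [calN, diagonal_mul_diagonal, ← diagonal_one]
  congr 1
  ext p
  have class_nonempty : 0 < Nc p.1 := p.2.pos
  exact mul_inv_cancel₀ (Nat.cast_ne_zero.mpr class_nonempty.ne')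

lemma isSymm_calN_inv : (calN Q Nc)⁻¹.IsSymm := by
  rw [calN_inv_eq_diagonal]
  exact isSymm_diagonal _

lemma posSemidef_mul_calN_inv_mul_transpose {m : Type*} [Finite m] (A : Matrix m (Idx Q Nc) ℝ) :
    (A * (calN Q Nc)⁻¹ * Aᵀ).PosSemidef := by
  have hN : (calN Q Nc)⁻¹.PosSemidef := by
    rw [calN_inv_eq_diagonal]
    exact .diagonal fun p => inv_nonneg.mpr (Nat.cast_nonneg _)
  simpa only [conjTranspose_eq_transpose_of_trivial] using hN.mul_mul_conjTranspose_same A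

lemma mul_calN_inv_mul_classIndicator_transpose_apply {m : Type*} (A : Matrix m (Idx Q Nc) ℝ)
    (a : m) (j : Fin Q) :
    (A * (calN Q Nc)⁻¹ * (classIndicator Nc)ᵀ) a j = (Nc j : ℝ)⁻¹ * ∑ i, A a ⟨j, i⟩ := by
  rw [calN_inv_eq_diagonal, Matrix.mul_apply]
  simp [classIndicator_apply, Fintype.sum_sigma, Finset.mul_sum, mul_comm]

lemma classIndicator_mul_calN_inv_mul_transpose (hNc : ∀ j, 0 < Nc j) :
    classIndicator Nc * (calN Q Nc)⁻¹ * (classIndicator Nc)ᵀ = 1 := by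
  ext j k
  have hk : (Nc k : ℝ) ≠ 0 := Nat.cast_ne_zero.mpr (hNc k).ne'
  rw [mul_calN_inv_mul_classIndicator_transpose_apply]
  obtain rfl | hjk := eq_or_ne j k
  · simp [classIndicator_apply, hk]
  · simp [classIndicator_apply, hjk]

variable {M : ℕ} (X : Matrix (Fin M) (Idx Q Nc) ℝ)

lemma classMeans_eq_mul_calN_inv_mul_classIndicator_transpose :
    classMeans Nc X = X * (calN Q Nc)⁻¹ * (classIndicator Nc)ᵀ := by
  ext a j
  exact (mul_calN_inv_mul_classIndicator_transpose_apply Nc X a j).symm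

lemma barX_eq_classMeans_mul_classIndicator :
    barX Nc X = classMeans Nc X * classIndicator Nc :=
  (mul_classIndicator Nc _).symm

lemma mul_calN_inv_mul_transpose_eq_add (hNc : ∀ j, 0 < Nc j) :
    X * (calN Q Nc)⁻¹ * Xᵀ = classMeans Nc X * (classMeans Nc X)ᵀ +
      deltaX Nc X * (calN Q Nc)⁻¹ * (deltaX Nc X)ᵀ := by
  rw [deltaX, barX_eq_classMeans_mul_classIndicator,
    classMeans_eq_mul_calN_inv_mul_classIndicator_transpose]
  exact gram_eq_gram_coords_add_gram_sub_projection (isSymm_calN_inv Nc)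
    (classIndicator_mul_calN_inv_mul_transpose Nc hNc) X

end ClassWeights

theorem statement10_general {Q M : ℕ} (Nc : Fin Q → ℕ) (hNc : ∀ j, 0 < Nc j)
    (X₀ : Matrix (Fin M) (Idx Q Nc) ℝ)
    (hred : Function.Injective (classMeans Nc X₀).vecMul) :
    (deltaX Nc X₀ * (calN Q Nc)⁻¹ * (deltaX Nc X₀)ᵀ).PosSemidef ∧
    (classMeans Nc X₀ * (classMeans Nc X₀)ᵀ).PosDef ∧
    X₀ * (calN Q Nc)⁻¹ * X₀ᵀ =
      classMeans Nc X₀ * (classMeans Nc X₀)ᵀ +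
        deltaX Nc X₀ * (calN Q Nc)⁻¹ * (deltaX Nc X₀)ᵀ ∧
    (X₀ * (calN Q Nc)⁻¹ * X₀ᵀ).PosDef ∧
    IsUnit (X₀ * (calN Q Nc)⁻¹ * X₀ᵀ) := by
  have hD := posSemidef_mul_calN_inv_mul_transpose Nc (deltaX Nc X₀)
  have hC : (classMeans Nc X₀ * (classMeans Nc X₀)ᵀ).PosDef := by
    simpa only [conjTranspose_eq_transpose_of_trivial] using
      PosDef.mul_conjTranspose_self (classMeans Nc X₀) hred
  have hsum := mul_calN_inv_mul_transpose_eq_add Nc X₀ hNc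
  have hX : (X₀ * (calN Q Nc)⁻¹ * X₀ᵀ).PosDef := hsum ▸ hC.add_posSemidef hD
  exact ⟨hD, hC, hsum, hX, hX.isUnit⟩

/-- For `M = Q` with `X̄₀^red` invertible, `D₂ := ΔX₀𝒩⁻¹ΔX₀ᵀ` is symmetric
positive semidefinite, `X̄₀^red(X̄₀^red)ᵀ` is symmetric positive definite, and
`X₀𝒩⁻¹X₀ᵀ = X̄₀^red(X̄₀^red)ᵀ + D₂` is positive definite, in particular invertible. -/
theorem statement10 {Q : ℕ} (Nc : Fin Q → ℕ) (hNc : ∀ j, 0 < Nc j)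
    (X₀ : Matrix (Fin Q) (Idx Q Nc) ℝ)
    (hred : IsUnit (classMeans Nc X₀)) :
    (deltaX Nc X₀ * (calN Q Nc)⁻¹ * (deltaX Nc X₀)ᵀ).PosSemidef ∧
    (classMeans Nc X₀ * (classMeans Nc X₀)ᵀ).PosDef ∧
    X₀ * (calN Q Nc)⁻¹ * X₀ᵀ =
      classMeans Nc X₀ * (classMeans Nc X₀)ᵀ +
        deltaX Nc X₀ * (calN Q Nc)⁻¹ * (deltaX Nc X₀)ᵀ ∧
    (X₀ * (calN Q Nc)⁻¹ * X₀ᵀ).PosDef ∧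
    IsUnit (X₀ * (calN Q Nc)⁻¹ * X₀ᵀ) :=
  statement10_general Nc hNc X₀ (vecMul_injective_of_isUnit hred)
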